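/- Let X be a periodic simple graph with free Γ-action and finite quotient, N_m = Σ_{[C]_Γ ∈ [Red_m]_Γ} ν(C) where ν(C) = |C|/|Γ_C| for prime C (extended to powers by ν(D^k)=ν(D)). Then N_m = Tr_Γ(A_m) - t_m, i.e., N_m equals the number of reduced closed paths of length m whose origin lies in the fundamental domain F. -/

import Mathlib

/-- A path `(f 0, f 1, …, f m)` in a simple graph is proper if consecutive vertices are
adjacent and it has no backtracking. -/
def IsProperPath {V : Type*} (G : SimpleGraph V) (m : ℕ) (f : ℕ → V) : Prop :=
  (∀ i, i < m → G.Adj (f i) (f (i + 1))) ∧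
  (∀ i, 1 ≤ i → i + 1 ≤ m → f (i - 1) ≠ f (i + 1))

/-- A closed path `(f 0, …, f m = f 0)` has a tail if there is `k` with
`1 ≤ k ≤ ⌊m/2⌋ - 1` such that `f j = f (m - j)` for `j = 1, …, k`. -/
def HasTail {V : Type*} (m : ℕ) (f : ℕ → V) : Prop :=
  ∃ k, 1 ≤ k ∧ k ≤ m / 2 - 1 ∧ ∀ j, 1 ≤ j → j ≤ k → f j = f (m - j)

/-- `pathCount G m x y` = `A_m(x,y)`, the number of proper paths of length `m`
from `x` to `y`. -/
noncomputable def pathCount {V : Type*} (G : SimpleGraph V) (m : ℕ) (x y : V) : ℕ :=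
  Nat.card {f : ℕ → V //
    IsProperPath G m f ∧ f 0 = x ∧ f m = y ∧ ∀ i, m ≤ i → f i = y}

/-- `t_m`: the number of proper closed paths of length `m` with a tail starting in `F`. -/
noncomputable def tailCount {V : Type*} (G : SimpleGraph V) (F : Finset V) (m : ℕ) : ℕ :=
  ∑ x ∈ F, Nat.card {f : ℕ → V //
    IsProperPath G m f ∧ f 0 = x ∧ f m = x ∧ HasTail m f ∧ ∀ i, m ≤ i → f i = x}

/-- A reduced closed path of length `m`, written cyclically. -/
def IsReducedCycle {V : Type*} (G : SimpleGraph V) (m : ℕ) (C : ZMod m → V) : Prop :=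
  (∀ j, G.Adj (C j) (C (j + 1))) ∧ ∀ j, C (j + 2) ≠ C j

/-- The least (positive) period of a cyclic path: the length of the underlying prime cycle. -/
noncomputable def leastPeriod {V : Type*} (m : ℕ) (C : ZMod m → V) : ℕ :=
  sInf {ℓ : ℕ | 0 < ℓ ∧ ∀ j, C (j + (ℓ : ZMod m)) = C j}

/-- `ν(C) = |D| / |Γ_C|` where `D` is the prime cycle underlying `C` (so `|D|` is the least
period of `C`) and `Γ_C` is the stabilizer of the cycle `C` in `Γ`. -/
noncomputable def nu {V : Type*} (Γ : Type*) [Group Γ] [MulAction Γ V]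
    (m : ℕ) (C : ZMod m → V) : ℚ :=
  (leastPeriod m C : ℚ) /
    (Nat.card {γ : Γ | ∃ p : ZMod m, ∀ j, γ • C j = C (j - p)} : ℚ)

/-- `Γ`-equivalence of reduced cycles: `C ∼_Γ D` iff `D` is obtained from `C` by applying
some `γ ∈ Γ` and shifting the origin. -/
def cycRel {V : Type*} (Γ : Type*) [Group Γ] [MulAction Γ V] (G : SimpleGraph V) (m : ℕ)
    (C D : {C : ZMod m → V // IsReducedCycle G m C}) : Prop :=
  ∃ γ : Γ, ∃ k : ZMod m, ∀ j, D.1 j = γ • C.1 (j + k)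

/-! ### Finiteness of paths -/

/-- Vertices at the end of walks of length `n` from `x`. -/
def ballSet {V : Type*} (G : SimpleGraph V) (x : V) : ℕ → Set V
  | 0 => {x}
  | n + 1 => ⋃ v ∈ ballSet G x n, G.neighborSet v

lemma ballSet_finite {V : Type*} (G : SimpleGraph V)
    (hfin : ∀ v, (G.neighborSet v).Finite) (x : V) (n : ℕ) : (ballSet G x n).Finite := by
  induction n with
  | zero => exact Set.finite_singleton x
  | succ n ih => exact ih.biUnion (fun v _ => hfin v)

lemma paths_finite {V : Type*} (G : SimpleGraph V)
    (hfin : ∀ v, (G.neighborSet v).Finite) (x : V) (m : ℕ) :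
    Finite {f : ℕ → V // IsProperPath G m f ∧ f 0 = x ∧ f m = x ∧ ∀ i, m ≤ i → f i = x} := by
  have h1 : {g : Fin (m + 1) → V | ∀ i : Fin (m + 1), g i ∈ ballSet G x i.val}.Finite :=
    Set.Finite.pi' (fun i => ballSet_finite G hfin x i)
  have : Finite {g : Fin (m + 1) → V | ∀ i : Fin (m + 1), g i ∈ ballSet G x i.val} := h1
  have key : ∀ f : ℕ → V, IsProperPath G m f → f 0 = x → ∀ i, i ≤ m → f i ∈ ballSet G x i := by
    intro f hf h0 i
    induction i with
    | zero => intro _; exact h0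
    | succ i ih =>
      intro hi
      exact Set.mem_biUnion (ih (by omega)) (hf.1 i (by omega))
  refine Finite.of_injective
    (β := {g : Fin (m + 1) → V | ∀ i : Fin (m + 1), g i ∈ ballSet G x i.val})
    (fun f => ⟨fun i => f.1 i, fun i => key f.1 f.2.1 f.2.2.1 i (by omega)⟩) ?_
  rintro ⟨f, hf⟩ ⟨g, hg⟩ h
  apply Subtype.ext
  funext i
  by_cases hi : i ≤ m
  · have := congrFun (congrArg Subtype.val h) ⟨i, by omega⟩
    exact this
  · show f i = g i
    rw [hf.2.2.2 i (by omega), hg.2.2.2 i (by omega)]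

/-! ### Cyclic versus linear description of closed paths -/

lemma tail_iff {V : Type*} (G : SimpleGraph V) (m : ℕ) (hm : 1 ≤ m) (f : ℕ → V)
    (hf : IsProperPath G m f) (hc : f m = f 0) : HasTail m f ↔ f 1 = f (m - 1) := by
  constructor
  · rintro ⟨k, hk, _, h⟩
    exact h 1 le_rfl hk
  · intro h
    by_cases h4 : 4 ≤ m
    · refine ⟨1, le_rfl, by omega, fun j h1 h2 => ?_⟩
      obtain rfl : j = 1 := by omega
      exact h
    · exfalso
      have : m = 1 ∨ m = 2 ∨ m = 3 := by omega
      rcases this with rfl | rfl | rfl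
      · exact (hf.1 0 (by omega)).ne h.symm
      · exact hf.2 1 le_rfl (by omega) hc.symm
      · exact (hf.1 1 (by omega)).ne h

lemma cyc_eq {V : Type*} (m : ℕ) [NeZero m] (f : ℕ → V) (hc : f m = f 0) (i : ℕ) (hi : i ≤ m) :
    f ((i : ZMod m).val) = f i := by
  rw [ZMod.val_natCast]
  rcases hi.lt_or_eq with h | rfl
  · rw [Nat.mod_eq_of_lt h]
  · rw [Nat.mod_self, hc]

lemma reduced_of_path {V : Type*} (G : SimpleGraph V) (m : ℕ) [NeZero m] (f : ℕ → V)
    (hf : IsProperPath G m f) (hc : f m = f 0) (ht : f 1 ≠ f (m - 1)) :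
    IsReducedCycle G m (fun j => f j.val) := by
  have hm : 1 ≤ m := Nat.one_le_iff_ne_zero.2 (NeZero.ne m)
  constructor
  · intro j
    have hj := ZMod.val_lt j
    have e : j + 1 = ((j.val + 1 : ℕ) : ZMod m) := by simp
    show G.Adj (f j.val) (f (j + 1).val)
    rw [e, cyc_eq m f hc _ (by omega)]
    exact hf.1 _ hj
  · intro j
    have hj := ZMod.val_lt j
    show f (j + 2).val ≠ f j.val
    by_cases h2 : j.val + 2 ≤ m
    · have e : j + 2 = ((j.val + 2 : ℕ) : ZMod m) := by simp
      rw [e, cyc_eq m f hc _ h2]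
      exact (hf.2 (j.val + 1) (by omega) (by omega)).symm
    · have h3 : j.val + 2 = m + 1 := by omega
      have e : j + 2 = ((1 : ℕ) : ZMod m) := by
        have : j + 2 = ((j.val + 2 : ℕ) : ZMod m) := by simp
        rw [this, h3]; simp
      rw [e, cyc_eq m f hc _ hm]
      have : j.val = m - 1 := by omega
      rw [this]; exact ht

lemma nontail_card {V : Type*} (G : SimpleGraph V) (m : ℕ) [NeZero m] (x : V) :
    Nat.card {f : ℕ → V // IsProperPath G m f ∧ f 0 = x ∧ f m = x ∧ ¬ HasTail m f ∧
      ∀ i, m ≤ i → f i = x} =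
    Nat.card {C : {C : ZMod m → V // IsReducedCycle G m C} // C.1 0 = x} := by
  have hm : 1 ≤ m := Nat.one_le_iff_ne_zero.2 (NeZero.ne m)
  have aux : ∀ C : ZMod m → V, C 0 = x → ∀ i : ℕ, i ≤ m →
      (fun i : ℕ => if i < m then C i else x) i = C i := by
    intro C h0 i hi
    by_cases h : i < m
    · simp [h]
    · obtain rfl : i = m := by omega
      simp [h0]
  refine Nat.card_congr
    { toFun := fun f => ⟨⟨fun j => f.1 j.val, reduced_of_path G m f.1 f.2.1
        (by rw [f.2.2.1, f.2.2.2.1]) (fun h => f.2.2.2.2.1 ((tail_iff G m hm f.1 f.2.1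
          (by rw [f.2.2.1, f.2.2.2.1])).2 h))⟩, by simpa using f.2.2.1⟩
      invFun := fun C => ⟨fun i : ℕ => if i < m then C.1.1 i else x, ?_⟩
      left_inv := ?_
      right_inv := ?_ }
  · have A := aux C.1.1 C.2
    have hp : IsProperPath G m (fun i : ℕ => if i < m then C.1.1 i else x) := by
      constructor
      · intro i hi
        rw [A i hi.le, A (i + 1) hi]
        simpa using C.1.2.1 i
      · intro i h1 h2
        rw [A (i - 1) (by omega), A (i + 1) h2]
        obtain ⟨k, rfl⟩ : ∃ k, i = k + 1 := ⟨i - 1, by omega⟩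
        have := C.1.2.2 k
        have e : ((k + 1 + 1 : ℕ) : ZMod m) = (k : ZMod m) + 2 := by push_cast; ring
        rw [e]
        simpa using this.symm
    have h0 : (fun i : ℕ => if i < m then C.1.1 i else x) 0 = x := by
      rw [A 0 (by omega)]; simpa using C.2
    have hmm : (fun i : ℕ => if i < m then C.1.1 i else x) m = x := by simp
    refine ⟨hp, h0, hmm, ?_, ?_⟩
    · rw [tail_iff G m hm _ hp (hmm.trans h0.symm)]
      have A1 := A 1 hm
      have A2 := A (m - 1) (by omega)
      simp only at A1 A2 ⊢
      rw [A1, A2]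
      have := C.1.2.2 (-1)
      have e : ((m - 1 : ℕ) : ZMod m) = -1 := by
        rw [Nat.cast_sub hm]; simp
      rw [e]
      have e2 : (-1 + 2 : ZMod m) = ((1 : ℕ) : ZMod m) := by push_cast; ring
      rw [e2] at this
      exact this
    · intro i hi
      simp [Nat.not_lt.2 hi]
  · rintro ⟨f, hf⟩
    apply Subtype.ext
    funext i
    by_cases h : i < m
    · simp [h, ZMod.val_natCast, Nat.mod_eq_of_lt h]
    · simp [h, hf.2.2.2.2 i (by omega)]
  · rintro ⟨⟨C, hC⟩, h0⟩
    apply Subtype.ext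
    apply Subtype.ext
    funext j
    simp [ZMod.val_lt j]

lemma path_split {V : Type*} (G : SimpleGraph V)
    (hfin : ∀ v, (G.neighborSet v).Finite) (m : ℕ) [NeZero m] (x : V) :
    pathCount G m x x = Nat.card {f : ℕ → V //
      IsProperPath G m f ∧ f 0 = x ∧ f m = x ∧ HasTail m f ∧ ∀ i, m ≤ i → f i = x} +
    Nat.card {C : {C : ZMod m → V // IsReducedCycle G m C} // C.1 0 = x} := by
  classical
  rw [← nontail_card, pathCount]
  have h := paths_finite G hfin x m
  have hs : {f : ℕ → V | IsProperPath G m f ∧ f 0 = x ∧ f m = x ∧ ∀ i, m ≤ i → f i = x}.Finite := h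
  have e : {f : ℕ → V | IsProperPath G m f ∧ f 0 = x ∧ f m = x ∧ ∀ i, m ≤ i → f i = x} =
    {f : ℕ → V | IsProperPath G m f ∧ f 0 = x ∧ f m = x ∧ HasTail m f ∧ ∀ i, m ≤ i → f i = x} ∪
    {f : ℕ → V | IsProperPath G m f ∧ f 0 = x ∧ f m = x ∧ ¬ HasTail m f ∧ ∀ i, m ≤ i → f i = x} := by
    ext f
    simp only [Set.mem_ofPred_eq, Set.mem_union]
    tauto
  have hd : Disjoint
    {f : ℕ → V | IsProperPath G m f ∧ f 0 = x ∧ f m = x ∧ HasTail m f ∧ ∀ i, m ≤ i → f i = x}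
    {f : ℕ → V | IsProperPath G m f ∧ f 0 = x ∧ f m = x ∧ ¬ HasTail m f ∧ ∀ i, m ≤ i → f i = x} := by
    rw [Set.disjoint_left]
    rintro f h1 h2
    exact h2.2.2.2.1 h1.2.2.2.1
  have := Set.ncard_union_eq hd (hs.subset (e ▸ Set.subset_union_left))
    (hs.subset (e ▸ Set.subset_union_right))
  rw [← e] at this
  exact this

lemma reduced_finite {V : Type*} (G : SimpleGraph V)
    (hfin : ∀ v, (G.neighborSet v).Finite) (m : ℕ) [NeZero m] (x : V) :
    Finite {C : {C : ZMod m → V // IsReducedCycle G m C} // C.1 0 = x} := by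
  have h := paths_finite G hfin x m
  by_contra hinf
  have hi : Infinite {C : {C : ZMod m → V // IsReducedCycle G m C} // C.1 0 = x} :=
    not_finite_iff_infinite.1 hinf
  -- inject into paths
  refine hinf (Finite.of_injective
    (β := {f : ℕ → V // IsProperPath G m f ∧ f 0 = x ∧ f m = x ∧ ∀ i, m ≤ i → f i = x})
    (fun C => ⟨fun i : ℕ => if i < m then C.1.1 i else x, ?_⟩) ?_)
  · have hm : 1 ≤ m := Nat.one_le_iff_ne_zero.2 (NeZero.ne m)
    have A : ∀ i : ℕ, i ≤ m → (fun i : ℕ => if i < m then C.1.1 i else x) i = C.1.1 i := by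
      intro i hi
      by_cases h : i < m
      · simp [h]
      · obtain rfl : i = m := by omega
        simp [C.2]
    refine ⟨⟨?_, ?_⟩, ?_, by simp, ?_⟩
    · intro i hi
      rw [A i hi.le, A (i + 1) hi]
      simpa using C.1.2.1 i
    · intro i h1 h2
      rw [A (i - 1) (by omega), A (i + 1) h2]
      obtain ⟨k, rfl⟩ : ∃ k, i = k + 1 := ⟨i - 1, by omega⟩
      have := C.1.2.2 k
      have e : ((k + 1 + 1 : ℕ) : ZMod m) = (k : ZMod m) + 2 := by push_cast; ring
      rw [e]
      simpa using this.symm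
    · rw [A 0 (by omega)]; simpa using C.2
    · intro i hi
      simp [Nat.not_lt.2 hi]
  · rintro ⟨⟨C, hC⟩, h0⟩ ⟨⟨D, hD⟩, h0'⟩ h
    apply Subtype.ext
    apply Subtype.ext
    funext j
    have := congrFun (congrArg Subtype.val h) j.val
    simpa [ZMod.val_lt j] using this

/-! ### Counting a class -/

lemma card_mul_of_fibers {A B : Type*} [Finite A] [Finite B] (f : A → B) (n : ℕ)
    (h : ∀ b, Nat.card {a // f a = b} = n) : Nat.card A = Nat.card B * n := by
  classical
  have := Fintype.ofFinite B
  rw [Nat.card_congr (Equiv.sigmaFiberEquiv f).symm, Nat.card_sigma]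
  simp [h]

/-- The group of periods of `C`. -/
def periodGroup {V : Type*} (m : ℕ) (C : ZMod m → V) : AddSubgroup (ZMod m) where
  carrier := {p | ∀ j, C (j + p) = C j}
  zero_mem' := by simp
  add_mem' := by
    intro a b ha hb j
    rw [← add_assoc, hb, ha]
  neg_mem' := by
    intro a ha j
    rw [← ha (j + -a)]; simp

lemma leastPeriod_mul {V : Type*} (m : ℕ) [NeZero m] (C : ZMod m → V) :
    m = leastPeriod m C * Nat.card (periodGroup m C) := by
  have h1 : Nat.card (ZMod m) = m := Nat.card_zmod m
  have h2 := AddSubgroup.card_eq_card_quotient_mul_card_addSubgroup (periodGroup m C)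
  have h3 : leastPeriod m C = Nat.card (ZMod m ⧸ periodGroup m C) := by
    let a : ZMod m ⧸ periodGroup m C := QuotientAddGroup.mk 1
    have ha : ∀ x, x ∈ AddSubgroup.zmultiples a := by
      intro x
      obtain ⟨y, rfl⟩ := QuotientAddGroup.mk_surjective x
      refine ⟨(y.val : ℤ), ?_⟩
      show ((y.val : ℤ)) • a = _
      rw [natCast_zsmul]
      show y.val • (QuotientAddGroup.mk 1 : ZMod m ⧸ periodGroup m C) = _
      rw [← QuotientAddGroup.mk_nsmul]
      simp
    rw [← addOrderOf_eq_card_of_forall_mem_zmultiples ha]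
    have hmem : ∀ n : ℕ, n • a = 0 ↔ ∀ j, C (j + (n : ZMod m)) = C j := by
      intro n
      show n • (QuotientAddGroup.mk 1 : ZMod m ⧸ periodGroup m C) = 0 ↔ _
      rw [← QuotientAddGroup.mk_nsmul, QuotientAddGroup.eq_zero_iff, nsmul_one]
      rfl
    have hpos : 0 < addOrderOf a := addOrderOf_pos a
    apply le_antisymm
    · exact Nat.sInf_le ⟨hpos, (hmem _).1 (addOrderOf_nsmul_eq_zero a)⟩
    · have hne : {ℓ : ℕ | 0 < ℓ ∧ ∀ j, C (j + (ℓ : ZMod m)) = C j}.Nonempty :=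
        ⟨_, hpos, (hmem _).1 (addOrderOf_nsmul_eq_zero a)⟩
      have := Nat.sInf_mem hne
      exact addOrderOf_le_of_nsmul_eq_zero this.1 ((hmem _).2 this.2)
  rw [h3, ← h2, h1]

lemma cycRel_equiv {V : Type*} (Γ : Type*) [Group Γ] [MulAction Γ V] (G : SimpleGraph V) (m : ℕ) :
    Equivalence (cycRel Γ G m) where
  refl C := ⟨1, 0, by simp⟩
  symm := by
    rintro C D ⟨γ, k, h⟩
    refine ⟨γ⁻¹, -k, fun j => ?_⟩
    rw [h]; simp
  trans := by
    rintro C D E ⟨γ, k, h⟩ ⟨γ', k', h'⟩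
    refine ⟨γ' * γ, k' + k, fun j => ?_⟩
    rw [h', h, mul_smul, add_assoc]

/-- Shifts realised by elements of the group. -/
def shiftSet {V : Type*} (Γ : Type*) [Group Γ] [MulAction Γ V] (m : ℕ) (C : ZMod m → V) :
    Set (ZMod m) := {p | ∃ γ : Γ, ∀ j, γ • C j = C (j - p)}

lemma stab_finite {V : Type*} {Γ : Type*} [Group Γ] [MulAction Γ V]
    (hfree : ∀ (g : Γ) (x : V), g • x = x → g = 1) (m : ℕ) [NeZero m] (C : ZMod m → V) :
    Finite {γ : Γ | ∃ p : ZMod m, ∀ j, γ • C j = C (j - p)} := by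
  refine Finite.of_injective
    (β := ZMod m) (fun γ => Classical.choose γ.2) ?_
  rintro ⟨γ, hγ⟩ ⟨γ', hγ'⟩ h
  have h1 := Classical.choose_spec hγ 0
  have h2 := Classical.choose_spec hγ' 0
  simp only at h
  rw [h, ← h2] at h1
  apply Subtype.ext
  have : γ'⁻¹ * γ = 1 := hfree _ (C 0) (by rw [mul_smul, h1, inv_smul_smul])
  exact (inv_mul_eq_one.1 this).symm

lemma shift_card {V : Type*} {Γ : Type*} [Group Γ] [MulAction Γ V]
    (hfree : ∀ (g : Γ) (x : V), g • x = x → g = 1) (m : ℕ) [NeZero m] (C : ZMod m → V) :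
    Nat.card (shiftSet Γ m C) =
      Nat.card {γ : Γ | ∃ p : ZMod m, ∀ j, γ • C j = C (j - p)} * Nat.card (periodGroup m C) := by
  have := stab_finite hfree m C
  choose g hg using fun p : shiftSet Γ m C => p.2
  refine card_mul_of_fibers
    (B := {γ : Γ | ∃ p : ZMod m, ∀ j, γ • C j = C (j - p)}) (fun p => ⟨g p, p.1, hg p⟩) _ ?_
  rintro ⟨γ, p₀, hp₀⟩
  have hu : ∀ p : shiftSet Γ m C, (∀ j, γ • C j = C (j - p.1)) → g p = γ := by
    intro p hp
    have : γ⁻¹ * g p = 1 := hfree _ (C 0) (by rw [mul_smul, hg, ← hp, inv_smul_smul])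
    exact (inv_mul_eq_one.1 this).symm
  refine Nat.card_congr
    { toFun := fun p => ⟨p.1.1 - p₀, ?_⟩
      invFun := fun q => ⟨⟨q.1 + p₀, γ, ?_⟩, ?_⟩
      left_inv := ?_
      right_inv := ?_ }
  · obtain ⟨p, hp⟩ := p
    have hp' : g p = γ := congrArg Subtype.val hp
    intro j
    have h1 := hg p (j + p.1)
    have h2 := hp₀ (j + p.1)
    rw [hp', h2] at h1
    rw [← add_sub_assoc, h1]; simp
  · intro j
    rw [hp₀, ← q.2 (j - (q.1 + p₀))]
    congr 1; ring
  · apply Subtype.ext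
    apply hu
    intro j
    rw [hp₀, ← q.2 (j - (q.1 + p₀))]
    congr 1; ring
  · intro p
    apply Subtype.ext
    apply Subtype.ext
    simp
  · intro q
    apply Subtype.ext
    simp

lemma class_card {V : Type*} {Γ : Type*} [Group Γ] [MulAction Γ V]
    (G : SimpleGraph V)
    (hauto : ∀ (g : Γ) (x y : V), G.Adj (g • x) (g • y) ↔ G.Adj x y)
    (hfree : ∀ (g : Γ) (x : V), g • x = x → g = 1)
    (F : Finset V) (hF : ∀ x : V, ∃! y, y ∈ F ∧ ∃ g : Γ, g • y = x)
    (m : ℕ) [NeZero m] (C : {C : ZMod m → V // IsReducedCycle G m C}) :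
    m = Nat.card {D : {C : ZMod m → V // IsReducedCycle G m C} // D.1 0 ∈ F ∧ cycRel Γ G m C D} *
      Nat.card (shiftSet Γ m C.1) := by
  have hex : ∀ k : ZMod m, ∃ γ : Γ, γ • C.1 k ∈ F := by
    intro k
    obtain ⟨y, ⟨hy, g, hg⟩, _⟩ := hF (C.1 k)
    exact ⟨g⁻¹, by rw [← hg, inv_smul_smul]; exact hy⟩
  choose γ hγ using hex
  have huniq : ∀ (g : Γ) (k : ZMod m), g • C.1 k ∈ F → g = γ k := by
    intro g k hg
    obtain ⟨y, _, hy⟩ := hF (C.1 k)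
    have h1 := hy _ ⟨hg, g⁻¹, inv_smul_smul _ _⟩
    have h2 := hy _ ⟨hγ k, (γ k)⁻¹, inv_smul_smul _ _⟩
    have : (γ k)⁻¹ * g = 1 := hfree _ (C.1 k) (by rw [mul_smul, h1, ← h2, inv_smul_smul])
    exact (inv_mul_eq_one.1 this).symm
  have hred : ∀ k : ZMod m, IsReducedCycle G m (fun j => γ k • C.1 (j + k)) := by
    intro k
    constructor
    · intro j
      rw [hauto, add_right_comm]
      exact C.2.1 _
    · intro j h
      have := smul_left_cancel _ h
      rw [add_right_comm] at this
      exact C.2.2 _ this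
  let φ : ZMod m → {D : {C : ZMod m → V // IsReducedCycle G m C} //
      D.1 0 ∈ F ∧ cycRel Γ G m C D} :=
    fun k => ⟨⟨fun j => γ k • C.1 (j + k), hred k⟩, by simpa using hγ k, γ k, k, fun j => rfl⟩
  have hsurj : Function.Surjective φ := by
    rintro ⟨⟨D, hD⟩, h0, g, k, h⟩
    refine ⟨k, ?_⟩
    apply Subtype.ext
    apply Subtype.ext
    funext j
    have : g = γ k := huniq g k (by have := h 0; rw [zero_add] at this; rw [← this]; exact h0)
    show γ k • C.1 (j + k) = D j
    rw [← this]; exact (h j).symm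
  have := Finite.of_surjective φ hsurj
  conv_lhs => rw [← Nat.card_zmod m]
  refine card_mul_of_fibers φ _ ?_
  intro b
  obtain ⟨k, rfl⟩ := hsurj b
  have hiff : ∀ k', φ k' = φ k ↔ k - k' ∈ shiftSet Γ m C.1 := by
    intro k'
    constructor
    · intro h
      have h' : ∀ j, γ k' • C.1 (j + k') = γ k • C.1 (j + k) := fun j =>
        congrFun (congrArg (fun z => z.1.1) h) j
      refine ⟨(γ k')⁻¹ * γ k, fun j => ?_⟩
      have := h' (j - k)
      rw [sub_add_cancel] at this
      rw [mul_smul, ← this, inv_smul_smul]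
      exact congrArg C.1 (by ring)
    · rintro ⟨g, hg⟩
      have e : γ k' * g = γ k := by
        apply huniq
        rw [mul_smul, hg, sub_sub_cancel]
        exact hγ k'
      apply Subtype.ext
      apply Subtype.ext
      funext j
      show γ k' • C.1 (j + k') = γ k • C.1 (j + k)
      rw [← e, mul_smul, hg]
      exact congrArg (fun z => γ k' • C.1 z) (by ring)
  refine Nat.card_congr
    { toFun := fun p => ⟨k - p.1, (hiff _).1 p.2⟩
      invFun := fun q => ⟨k - q.1, (hiff _).2 (by rw [sub_sub_cancel]; exact q.2)⟩
      left_inv := ?_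
      right_inv := ?_ }
  · intro p; apply Subtype.ext; simp
  · intro p; apply Subtype.ext; simp

lemma nu_eq {V : Type*} {Γ : Type*} [Group Γ] [MulAction Γ V]
    (G : SimpleGraph V)
    (hauto : ∀ (g : Γ) (x y : V), G.Adj (g • x) (g • y) ↔ G.Adj x y)
    (hfree : ∀ (g : Γ) (x : V), g • x = x → g = 1)
    (F : Finset V) (hF : ∀ x : V, ∃! y, y ∈ F ∧ ∃ g : Γ, g • y = x)
    (m : ℕ) [NeZero m] (C : {C : ZMod m → V // IsReducedCycle G m C}) :
    nu Γ m C.1 = Nat.card {D : {C : ZMod m → V // IsReducedCycle G m C} //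
      D.1 0 ∈ F ∧ cycRel Γ G m C D} := by
  have h1 := class_card G hauto hfree F hF m C
  have h2 := leastPeriod_mul m C.1
  have h3 := shift_card hfree m C.1
  have hm := NeZero.ne m
  have hP : Nat.card (periodGroup m C.1) ≠ 0 := by
    intro h; rw [h, mul_zero] at h2; exact hm h2
  have hS : Nat.card (shiftSet Γ m C.1) ≠ 0 := by
    intro h; rw [h, mul_zero] at h1; exact hm h1
  have hG : Nat.card {γ : Γ | ∃ p : ZMod m, ∀ j, γ • C.1 j = C.1 (j - p)} ≠ 0 := by
    intro h; rw [h, zero_mul] at h3; exact hS h3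
  unfold nu
  rw [div_eq_iff (by exact_mod_cast hG)]
  norm_cast
  rw [h3, ← mul_assoc] at h1
  exact Nat.eq_of_mul_eq_mul_right (Nat.pos_of_ne_zero hP) (h2.symm.trans h1)

/-- For a periodic simple graph with free `Γ`-action and finite quotient,
`N_m = ∑_{[C]_Γ ∈ [Red_m]_Γ} ν(C)` satisfies `N_m = Tr_Γ(A_m) - t_m`. -/
theorem stmt7 {V : Type*} {Γ : Type*} [Group Γ] [MulAction Γ V]
    (G : SimpleGraph V) (d : ℕ)
    (hfin : ∀ v, (G.neighborSet v).Finite) (hdeg : ∀ v, (G.neighborSet v).ncard ≤ d)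
    (hauto : ∀ (g : Γ) (x y : V), G.Adj (g • x) (g • y) ↔ G.Adj x y)
    (hfree : ∀ (g : Γ) (x : V), g • x = x → g = 1)
    (F : Finset V) (hF : ∀ x : V, ∃! y, y ∈ F ∧ ∃ g : Γ, g • y = x)
    (m : ℕ) (hm : 1 ≤ m) :
    (∑ᶠ c : Quot (cycRel Γ G m), nu Γ m (Quot.out c).1) =
      (∑ x ∈ F, (pathCount G m x x : ℚ)) - (tailCount G F m : ℚ) := by
  classical
  have : NeZero m := ⟨by omega⟩
  -- reduced cycles starting in `F`
  let S := {D : {C : ZMod m → V // IsReducedCycle G m C} // D.1 0 ∈ F}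
  let e : S ≃ Σ x : F, {C : {C : ZMod m → V // IsReducedCycle G m C} // C.1 0 = x.1} :=
    { toFun := fun D => ⟨⟨D.1.1 0, D.2⟩, D.1, rfl⟩
      invFun := fun p => ⟨p.2.1, by rw [p.2.2]; exact p.1.2⟩
      left_inv := fun D => rfl
      right_inv := by
        rintro ⟨⟨x, hx⟩, C, hC⟩
        have hC' : C.1 0 = x := hC
        subst hC'
        rfl }
  have hfx : ∀ x : F, Finite {C : {C : ZMod m → V // IsReducedCycle G m C} // C.1 0 = x.1} :=
    fun x => reduced_finite G hfin m x.1
  have hSfin : Finite S := Finite.of_equiv _ e.symm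
  have hScard : Nat.card S =
      ∑ x ∈ F, Nat.card {C : {C : ZMod m → V // IsReducedCycle G m C} // C.1 0 = x} := by
    rw [Nat.card_congr e, Nat.card_sigma, ← Finset.sum_coe_sort F
      (fun x => Nat.card {C : {C : ZMod m → V // IsReducedCycle G m C} // C.1 0 = x})]
  let q : S → Quot (cycRel Γ G m) := fun D => Quot.mk _ D.1
  have hrel : ∀ C D, Quot.mk (cycRel Γ G m) C = Quot.mk _ D ↔ cycRel Γ G m C D := fun C D => by
    rw [Quot.eq, (cycRel_equiv Γ G m).eqvGen_iff]
  have hcls : ∀ c : Quot (cycRel Γ G m), nu Γ m (Quot.out c).1 = (Nat.card {D : S // q D = c} : ℚ) := by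
    intro c
    rw [nu_eq G hauto hfree F hF m (Quot.out c)]
    congr 1
    refine Nat.card_congr ((Equiv.subtypeSubtypeEquivSubtypeInter _ _).symm.trans
      (Equiv.subtypeEquivRight ?_))
    intro D
    rw [← hrel, Quot.out_eq]
    exact eq_comm
  have hq : Function.Surjective q := by
    intro c
    have h1 := class_card G hauto hfree F hF m (Quot.out c)
    have h2 : Nat.card {D : {C : ZMod m → V // IsReducedCycle G m C} //
        D.1 0 ∈ F ∧ cycRel Γ G m (Quot.out c) D} ≠ 0 := by
      intro h; rw [h, zero_mul] at h1; omega
    have h3 := (Nat.card_ne_zero.1 h2).1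
    obtain ⟨D, hD, hr⟩ := h3
    refine ⟨⟨D, hD⟩, ?_⟩
    show Quot.mk _ D = c
    rw [← (hrel _ _).2 hr, Quot.out_eq]
  have hQ : Finite (Quot (cycRel Γ G m)) := Finite.of_surjective q hq
  have := Fintype.ofFinite (Quot (cycRel Γ G m))
  have hL : (∑ᶠ c : Quot (cycRel Γ G m), nu Γ m (Quot.out c).1) = (Nat.card S : ℚ) := by
    rw [finsum_eq_sum_of_fintype, Nat.card_congr (Equiv.sigmaFiberEquiv q).symm, Nat.card_sigma]
    push_cast
    exact Finset.sum_congr rfl (fun c _ => hcls c)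
  rw [hL, hScard, tailCount]
  push_cast
  rw [← Finset.sum_sub_distrib]
  refine Finset.sum_congr rfl (fun x _ => ?_)
  rw [path_split G hfin m x]
  push_cast
  ring
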